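/- Let r be a prime number and ζ = exp(2πi/r) ∈ ℂ. On (ℤ/rℤ)^{11} × (ℤ/rℤ)^{11} define Q(x,y) = ∑_{i=1}^{11} x_i y_i ∈ ℤ/rℤ, and for an integer m and g = (x,y) set ω(m,g) = exp(2πi·(r−1)·m·q̃/r) ∈ ℂ, where q̃ ∈ {0,…,r−1} lifts Q(g). In ℂ[[X]] define Z₀ = (1/r²)·F(X^{r²}) + (1/r)·X^{r²−1}·∑_{j=0}^{r−1} ζ^{−j}·F(ζ^j X) and, for 0 ≤ m ≤ r−1, Z^{(m)} = (1/r)·ζ^{−m}·X^{r²−1}·F(ζ^m X). Then Z₀ + ∑_{g ≠ 0} ∑_{m=0}^{r−1} ω(m,g)·Z^{(m)} = (1/r²)·F(X^{r²}) + r^{21}·X^{r²−1}·F(X) + r^{10}·X^{r²−1}·∑_{m=1}^{r−1} ζ^{−m}·F(ζ^m X), where the outer sum runs over all nonzero g ∈ (ℤ/rℤ)^{11} × (ℤ/rℤ)^{11}. -/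

import Mathlib

open PowerSeries

/-- `c n`: the number of 24-tuples `(λ₁,…,λ₂₄)` of integer partitions with
`|λ₁| + ⋯ + |λ₂₄| = n`. -/
noncomputable def numPart (n : ℕ) : ℕ :=
  Nat.card { f : Fin 24 → Σ m : ℕ, Nat.Partition m // (∑ i, (f i).1) = n }

/-- `F = ∑_{n≥0} c_n X^n` in `ℂ[[X]]`. -/
noncomputable def F : PowerSeries ℂ := PowerSeries.mk fun n => (numPart n : ℂ)

/-- `ζ = exp(2πi/r)`. -/
noncomputable def zeta (r : ℕ) : ℂ := Complex.exp (2 * Real.pi * Complex.I / r)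

/-- The split quadratic form `Q(x,y) = ∑_{i=1}^{11} x_i y_i` on `(ℤ/rℤ)^{11} × (ℤ/rℤ)^{11}`. -/
def Q (r : ℕ) (g : (Fin 11 → ZMod r) × (Fin 11 → ZMod r)) : ZMod r :=
  ∑ i, g.1 i * g.2 i

/-- `ω(m,g) = exp(2πi·(r−1)·m·q̃/r)`, where `q̃ ∈ {0,…,r−1}` lifts `Q(g)`. -/
noncomputable def omegaFactor (r : ℕ) (m : ℕ) (g : (Fin 11 → ZMod r) × (Fin 11 → ZMod r)) : ℂ :=
  Complex.exp (2 * Real.pi * Complex.I * ((r:ℂ) - 1) * (m:ℂ) * ((Q r g).val : ℂ) / r)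

/-- `F(X^{r²}) = ∑_{k≥0} c_k X^{r²k}`. -/
noncomputable def FXr2 (r : ℕ) : PowerSeries ℂ :=
  PowerSeries.mk fun n => if r^2 ∣ n then (numPart (n / r^2) : ℂ) else 0

/-- `Z₀ = (1/r²)·F(X^{r²}) + (1/r)·X^{r²−1}·∑_{j=0}^{r−1} ζ^{−j}·F(ζ^j X)`. -/
noncomputable def Z0 (r : ℕ) : PowerSeries ℂ :=
  C (1/(r:ℂ)^2) * FXr2 r
    + C (1/(r:ℂ)) * X^(r^2-1) *
        ∑ j ∈ Finset.range r, C ((zeta r ^ j)⁻¹) * rescale (zeta r ^ j) F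

/-- `Z^{(m)} = (1/r)·ζ^{−m}·X^{r²−1}·F(ζ^m X)`. -/
noncomputable def Zm (r : ℕ) (m : ℕ) : PowerSeries ℂ :=
  C (1/(r:ℂ)) * C ((zeta r ^ m)⁻¹) * X^(r^2-1) * rescale (zeta r ^ m) F

lemma omega_eq (r : ℕ) [Fact r.Prime] (m : ℕ) (g : (Fin 11 → ZMod r) × (Fin 11 → ZMod r)) :
    omegaFactor r m g = ZMod.stdAddChar (-(m : ZMod r) * Q r g) := by
  have h : (-(m : ZMod r) * Q r g) = (((r : ℤ) - 1) * m * ((Q r g).val : ℤ) : ℤ) := by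
    push_cast
    simp
  rw [h, ZMod.stdAddChar_coe, omegaFactor]
  congr 1
  push_cast
  ring

lemma gauss_one (r : ℕ) [Fact r.Prime] (a : ZMod r) (ha : a ≠ 0) :
    ∑ p : ZMod r × ZMod r, (ZMod.stdAddChar (a * (p.1 * p.2)) : ℂ) = r := by
  rw [Fintype.sum_prod_type]
  have h : ∀ s : ZMod r, ∑ t : ZMod r, (ZMod.stdAddChar (a * (s * t)) : ℂ)
      = if s = 0 then (r : ℂ) else 0 := by
    intro s
    have := AddChar.sum_mulShift (a * s) (ZMod.isPrimitive_stdAddChar r)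
    simp only [mul_eq_zero, ha, false_or, ZMod.card] at this
    push_cast at this
    rw [← this]
    refine Finset.sum_congr rfl fun t _ => ?_
    congr 1
    ring
  simp [h]

lemma addChar_sum {A : Type*} [AddCommMonoid A] (ψ : AddChar A ℂ) {n : ℕ} (f : Fin n → A) :
    ψ (∑ i, f i) = ∏ i, ψ (f i) := by
  induction n with
  | zero => simp
  | succ k ih => rw [Fin.sum_univ_succ, Fin.prod_univ_succ, AddChar.map_add_eq_mul, ih]

lemma gauss_full (r : ℕ) [Fact r.Prime] (a : ZMod r) (ha : a ≠ 0) :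
    ∑ g : (Fin 11 → ZMod r) × (Fin 11 → ZMod r), (ZMod.stdAddChar (a * Q r g) : ℂ)
      = (r : ℂ) ^ 11 := by
  rw [← gauss_one r a ha, Fintype.sum_pow,
    ← (Equiv.arrowProdEquivProdArrow (Fin 11) (fun _ => ZMod r) (fun _ => ZMod r)).sum_comp]
  refine Finset.sum_congr rfl fun p _ => ?_
  rw [Q, Finset.mul_sum, addChar_sum]
  rfl

lemma omega_sum (r : ℕ) [Fact r.Prime] (m : ℕ) (hm : m < r) :
    ∑ g : (Fin 11 → ZMod r) × (Fin 11 → ZMod r), omegaFactor r m g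
      = if m = 0 then (r : ℂ) ^ 22 else (r : ℂ) ^ 11 := by
  simp only [omega_eq]
  split_ifs with h
  · subst h
    simp
    ring
  · apply gauss_full
    rw [neg_ne_zero, Ne, ZMod.natCast_eq_zero_iff]
    exact fun hd => h (Nat.eq_zero_of_dvd_of_lt hd hm)

lemma omega_sum_ne (r : ℕ) [Fact r.Prime] (m : ℕ) (hm : m < r) :
    ∑ g ∈ Finset.univ.filter
        (fun g : (Fin 11 → ZMod r) × (Fin 11 → ZMod r) => g ≠ 0), omegaFactor r m g
      = (if m = 0 then (r : ℂ) ^ 22 else (r : ℂ) ^ 11) - 1 := by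
  have h0 : omegaFactor r m 0 = 1 := by simp [omegaFactor, Q]
  rw [← omega_sum r m hm, Finset.filter_ne', ← Finset.add_sum_erase _ _ (Finset.mem_univ 0), h0]
  ring

/-- Theorem 6.10 (q-series content): for a prime `r`,
`Z₀ + ∑_{g ≠ 0} ∑_{m=0}^{r−1} ω(m,g)·Z^{(m)}
  = (1/r²)·F(X^{r²}) + r^{21}·X^{r²−1}·F(X) + r^{10}·X^{r²−1}·∑_{m=1}^{r−1} ζ^{−m}·F(ζ^m X)`. -/
theorem sur_zr_vafa_witten_K3 (r : ℕ) [Fact r.Prime] :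
    Z0 r + ∑ g ∈ Finset.univ.filter
        (fun g : (Fin 11 → ZMod r) × (Fin 11 → ZMod r) => g ≠ 0),
        ∑ m ∈ Finset.range r, C (omegaFactor r m g) * Zm r m
      = C (1/(r:ℂ)^2) * FXr2 r + C ((r:ℂ)^21) * X^(r^2-1) * F
        + C ((r:ℂ)^10) * X^(r^2-1) *
            ∑ m ∈ Finset.Ico 1 r, C ((zeta r ^ m)⁻¹) * rescale (zeta r ^ m) F := by
  have hr : (r : ℂ) ≠ 0 := Nat.cast_ne_zero.mpr (Fact.out : r.Prime).ne_zero
  have hpos : 0 < r := (Fact.out : r.Prime).pos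
  rw [Finset.sum_comm]
  have h1 : ∑ m ∈ Finset.range r, ∑ g ∈ Finset.univ.filter
        (fun g : (Fin 11 → ZMod r) × (Fin 11 → ZMod r) => g ≠ 0),
        C (omegaFactor r m g) * Zm r m
      = ∑ m ∈ Finset.range r,
        C ((if m = 0 then (r : ℂ) ^ 22 else (r : ℂ) ^ 11) - 1) * Zm r m := by
    refine Finset.sum_congr rfl fun m hm => ?_
    rw [← omega_sum_ne r m (Finset.mem_range.mp hm), map_sum, Finset.sum_mul]
  rw [h1, Z0, add_assoc, add_assoc, Finset.mul_sum, ← Finset.sum_add_distrib]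
  congr 1
  have h2 : ∀ m ∈ Finset.range r,
      C (1/(r:ℂ)) * X^(r^2-1) * (C ((zeta r ^ m)⁻¹) * rescale (zeta r ^ m) F)
        + C ((if m = 0 then (r : ℂ) ^ 22 else (r : ℂ) ^ 11) - 1) * Zm r m
      = C (if m = 0 then (r : ℂ) ^ 21 else (r : ℂ) ^ 10) * X^(r^2-1) *
        (C ((zeta r ^ m)⁻¹) * rescale (zeta r ^ m) F) := by
    intro m _
    have h3 : (if m = 0 then (r : ℂ) ^ 21 else (r : ℂ) ^ 10)
        = 1 / (r : ℂ) + ((if m = 0 then (r : ℂ) ^ 22 else (r : ℂ) ^ 11) - 1) * (1 / (r : ℂ)) := by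
      split_ifs <;> field_simp <;> ring
    rw [h3, Zm, map_add, map_mul]
    ring
  rw [Finset.sum_congr rfl h2, Finset.range_eq_Ico, Finset.sum_eq_sum_Ico_succ_bot hpos]
  congr 1
  · simp [rescale_one]
  · rw [Finset.mul_sum]
    refine Finset.sum_congr rfl fun m hm => ?_
    rw [if_neg (by have := (Finset.mem_Ico.mp hm).1; omega)]
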